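/- arXiv:1204.4520 — 3 statements merged into one kernel-verified Lean document; each statement's English description precedes it below -/
import Mathlib

section
/- Let S be a commutative local Noetherian ring whose residue field has characteristic p, where p is a prime, let G be a finite group and let P be a Sylow p-subgroup of G. A finitely generated module M over the group ring S[G] is projective as an S[G]-module if and only if the S[P]-module obtained from M by restriction of scalars along the inclusion S[P] ⊆ S[G] is projective as an S[P]-module. -/
/-- `S[G]` is projective over `S[H]`. -/
theorem proj_groupAlgebra (S : Type*) [CommRing S] (G : Type*) [Group G] (H : Subgroup G)
    [Module (MonoidAlgebra S H) (MonoidAlgebra S G)]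
    (hc : ∀ (a : MonoidAlgebra S H) (x : MonoidAlgebra S G),
      a • x = MonoidAlgebra.mapDomainRingHom S H.subtype a * x) :
    Module.Projective (MonoidAlgebra S H) (MonoidAlgebra S G) := by
  let rep : G → G := fun g => (Quotient.out ((g⁻¹ : G) : G ⧸ H))⁻¹
  have hrep : ∀ g, g * (rep g)⁻¹ ∈ H := by
    intro g
    obtain ⟨h, hh⟩ := QuotientGroup.mk_out_eq_mul H g⁻¹
    have : g * (rep g)⁻¹ = h := by
      simp only [rep, inv_inv]
      rw [hh]; simp
    rw [this]; exact h.2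
  have hinv : ∀ (h : H) (g : G), rep (h * g) = rep g := by
    intro h g
    have : (((h * g : G)⁻¹ : G) : G ⧸ H) = ((g⁻¹ : G) : G ⧸ H) := by
      rw [QuotientGroup.eq]; simp
    simp only [rep, this]
  let σ : MonoidAlgebra S G →+ (G →₀ MonoidAlgebra S H) :=
    (Finsupp.liftAddHom fun g => (Finsupp.singleAddHom (rep g)).comp
      (MonoidAlgebra.singleAddHom (⟨g * (rep g)⁻¹, hrep g⟩ : H))).comp
      MonoidAlgebra.coeffAddEquiv.toAddMonoidHom
  have hσ : ∀ g s, σ (MonoidAlgebra.single g s) =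
      Finsupp.single (rep g) (MonoidAlgebra.single (⟨g * (rep g)⁻¹, hrep g⟩ : H) s) := by
    intro g s
    simp [σ]
  let i : MonoidAlgebra S G →ₗ[MonoidAlgebra S H] (G →₀ MonoidAlgebra S H) :=
    { σ with
      map_smul' := by
        intro a x
        change σ (a • x) = a • σ x
        rw [hc]
        induction a using MonoidAlgebra.induction_linear with
        | zero => simp
        | add a b ha hb => rw [map_add, add_mul, map_add, ha, hb, add_smul]
        | single h t =>
          induction x using MonoidAlgebra.induction_linear with
          | zero => simp
          | add a b ha hb => rw [mul_add, map_add, map_add, ha, hb, smul_add]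
          | single g s =>
            have : (MonoidAlgebra.mapDomainRingHom S H.subtype) (MonoidAlgebra.single h t)
              = MonoidAlgebra.single (h : G) t := by simp
            rw [this, MonoidAlgebra.single_mul_single, hσ, hσ, Finsupp.smul_single, smul_eq_mul,
              MonoidAlgebra.single_mul_single]
            have e : (⟨(h : G) * g * (rep (h * g))⁻¹, hrep (h * g)⟩ : H) =
                h * ⟨g * (rep g)⁻¹, hrep g⟩ := by
              ext
              simp [hinv, mul_assoc]
            rw [e]
            exact congrArg (fun z => Finsupp.single z _) (hinv h g) }
  let q : (G →₀ MonoidAlgebra S H) →ₗ[MonoidAlgebra S H] MonoidAlgebra S G :=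
    Finsupp.linearCombination _ fun g => MonoidAlgebra.single g (1 : S)
  refine Module.Projective.of_split i q ?_
  ext x : 1
  change q (σ x) = x
  induction x using MonoidAlgebra.induction_linear with
  | zero => simp
  | add a b ha hb => rw [map_add, map_add, ha, hb]
  | single g s =>
    rw [hσ]
    simp only [q, Finsupp.linearCombination_single]
    rw [hc]
    simp

theorem proj_restrict (S : Type*) [CommRing S] (G : Type*) [Group G] (H : Subgroup G)
    (M : Type*) [AddCommGroup M] [Module (MonoidAlgebra S G) M] [Module (MonoidAlgebra S H) M]
    (hc : ∀ (a : MonoidAlgebra S H) (x : M),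
      a • x = MonoidAlgebra.mapDomainRingHom S H.subtype a • x)
    (h : Module.Projective (MonoidAlgebra S G) M) :
    Module.Projective (MonoidAlgebra S H) M := by
  letI : Module (MonoidAlgebra S H) (MonoidAlgebra S G) :=
    Module.compHom _ (MonoidAlgebra.mapDomainRingHom S H.subtype)
  have hc' : ∀ (a : MonoidAlgebra S H) (x : MonoidAlgebra S G),
      a • x = MonoidAlgebra.mapDomainRingHom S H.subtype a * x := fun _ _ => rfl
  haveI := proj_groupAlgebra S G H hc'
  obtain ⟨s, hs⟩ := Module.projective_def'.1 h
  have hcN : ∀ (a : MonoidAlgebra S H) (f : M →₀ MonoidAlgebra S G),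
      a • f = MonoidAlgebra.mapDomainRingHom S H.subtype a • f := by
    intro a f; ext1 m; rfl
  classical
  haveI : Module.Projective (MonoidAlgebra S H) (M →₀ MonoidAlgebra S G) :=
    Module.Projective.of_equiv' (finsuppLequivDFinsupp (MonoidAlgebra S H)).symm
  refine Module.Projective.of_split (M := M →₀ MonoidAlgebra S G)
    { s.toAddMonoidHom with map_smul' := ?_ }
    { (Finsupp.linearCombination (MonoidAlgebra S G) (id : M → M)).toAddMonoidHom with
      map_smul' := ?_ } ?_
  · intro a x
    change s (a • x) = a • s x
    rw [hc, hcN, map_smul]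
  · intro a x
    change Finsupp.linearCombination (MonoidAlgebra S G) (id : M → M) (a • x) =
      a • Finsupp.linearCombination (MonoidAlgebra S G) (id : M → M) x
    rw [hc, hcN, map_smul]
  · ext x
    exact LinearMap.congr_fun hs x

theorem proj_of_restrict (S : Type*) [CommRing S] (G : Type*) [Group G] (H : Subgroup G)
    [Finite G] (hu : IsUnit (H.index : S))
    (M : Type*) [AddCommGroup M] [Module (MonoidAlgebra S G) M] [Module (MonoidAlgebra S H) M]
    (hc : ∀ (a : MonoidAlgebra S H) (x : M),
      a • x = MonoidAlgebra.mapDomainRingHom S H.subtype a • x)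
    (h : Module.Projective (MonoidAlgebra S H) M) :
    Module.Projective (MonoidAlgebra S G) M := by
  letI : Module (MonoidAlgebra S H) (MonoidAlgebra S G) :=
    Module.compHom _ (MonoidAlgebra.mapDomainRingHom S H.subtype)
  have hcN : ∀ (a : MonoidAlgebra S H) (f : M →₀ MonoidAlgebra S G),
      a • f = MonoidAlgebra.mapDomainRingHom S H.subtype a • f := by
    intro a f; ext1 m; rfl
  let π := Finsupp.linearCombination (MonoidAlgebra S G) (id : M → M)
  let πH : (M →₀ MonoidAlgebra S G) →ₗ[MonoidAlgebra S H] M :=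
    { π.toAddMonoidHom with
      map_smul' := by
        intro a x
        change π (a • x) = a • π x
        rw [hc, hcN, map_smul] }
  obtain ⟨s, hs⟩ := Module.projective_lifting_property πH LinearMap.id
    (fun x => ⟨Finsupp.single x 1, by
      change π (Finsupp.single x 1) = x
      simp [π]⟩)
  replace hs : ∀ m, π (s m) = m := fun m => LinearMap.congr_fun hs m
  have hsH : ∀ (k : H) (r : S) m, s (MonoidAlgebra.single (k : G) r • m) =
      MonoidAlgebra.single (k : G) r • s m := by
    intro k r m
    have e : (MonoidAlgebra.mapDomainRingHom S H.subtype) (MonoidAlgebra.single k r)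
      = MonoidAlgebra.single (k : G) r := by simp
    have := s.map_smul (MonoidAlgebra.single k r) m
    rwa [hc, hcN, e] at this
  -- the conjugates
  let F : M → G ⧸ H → (M →₀ MonoidAlgebra S G) := fun m c =>
    Quotient.liftOn' c (fun g => MonoidAlgebra.single g (1 : S) •
      s (MonoidAlgebra.single g⁻¹ (1 : S) • m)) (by
      intro a b hab
      rw [QuotientGroup.leftRel_apply] at hab
      have e : b = a * (a⁻¹ * b) := by group
      obtain ⟨k, hk⟩ : ∃ k : H, (k : G) = a⁻¹ * b := ⟨⟨_, hab⟩, rfl⟩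
      rw [← hk] at e
      subst e
      have : MonoidAlgebra.single (a * (k : G))⁻¹ (1 : S) =
        MonoidAlgebra.single ((k⁻¹ : H) : G) 1 * MonoidAlgebra.single a⁻¹ 1 := by
        simp
      simp only [this, mul_smul, hsH]
      rw [← mul_smul, MonoidAlgebra.single_mul_single]
      simp)
  have hF : ∀ m (g : G), F m (g : G ⧸ H) = MonoidAlgebra.single g (1 : S) •
      s (MonoidAlgebra.single g⁻¹ (1 : S) • m) := fun _ _ => rfl
  haveI : Fintype (G ⧸ H) := Fintype.ofFinite _
  let T : M →ₗ[MonoidAlgebra S G] (M →₀ MonoidAlgebra S G) :=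
    { toFun := fun m => ∑ c, F m c
      map_add' := by
        intro x y
        rw [← Finset.sum_add_distrib]
        refine Finset.sum_congr rfl fun c _ => ?_
        induction c using QuotientGroup.induction_on with
        | H g => simp only [hF, smul_add, map_add]
      map_smul' := by
        intro a m
        simp only [RingHom.id_apply]
        induction a using MonoidAlgebra.induction_linear with
        | zero =>
          simp only [zero_smul]
          refine Finset.sum_eq_zero fun c _ => ?_
          induction c using QuotientGroup.induction_on with
          | H g => simp only [hF, smul_zero, map_zero]
        | add a b ha hb =>
          rw [add_smul a b (∑ c, F m c), ← ha, ← hb, ← Finset.sum_add_distrib]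
          refine Finset.sum_congr rfl fun c _ => ?_
          induction c using QuotientGroup.induction_on with
          | H g => simp only [hF, smul_add, map_add, add_smul]
        | single x r =>
          rw [Finset.smul_sum]
          refine (Fintype.sum_equiv (MulAction.toPerm x) _ _ fun c => ?_).symm
          induction c using QuotientGroup.induction_on with
          | H g =>
            have e : (MulAction.toPerm x : Equiv.Perm (G ⧸ H)) (g : G ⧸ H)
              = ((x * g : G) : G ⧸ H) := rfl
            rw [e, hF, hF, ← mul_smul, ← mul_smul]
            have e2 : MonoidAlgebra.single (x * g)⁻¹ (1 : S) * MonoidAlgebra.single x r =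
              MonoidAlgebra.single ((1 : H) : G) r * MonoidAlgebra.single g⁻¹ 1 := by
              simp
            rw [e2, mul_smul _ _ m, hsH, ← mul_smul]
            simp }
  have hT : ∀ m, π (T m) = MonoidAlgebra.single (1 : G) (H.index : S) • m := by
    intro m
    change π (∑ c, F m c) = _
    rw [map_sum]
    have : ∀ c, π (F m c) = m := by
      intro c
      induction c using QuotientGroup.induction_on with
      | H g =>
        rw [hF, map_smul, hs, ← mul_smul, MonoidAlgebra.single_mul_single]
        simp [← MonoidAlgebra.one_def]
    simp only [this, Finset.sum_const, Finset.card_univ]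
    rw [← Nat.card_eq_fintype_card, ← Subgroup.index]
    have e : MonoidAlgebra.single (1 : G) (H.index : S) = (H.index : MonoidAlgebra S G) := rfl
    rw [e, Nat.cast_smul_eq_nsmul]
  obtain ⟨u, hu⟩ := hu
  refine Module.projective_def.2 ⟨?_, ?_⟩
  · exact
    { toFun := fun m => T (MonoidAlgebra.single (1 : G) (↑u⁻¹ : S) • m)
      map_add' := by intro x y; rw [smul_add, map_add]
      map_smul' := by
        intro a x
        have : MonoidAlgebra.single (1 : G) (↑u⁻¹ : S) * a =
            a * MonoidAlgebra.single (1 : G) (↑u⁻¹ : S) := by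
          exact (MonoidAlgebra.single_one_comm _ _)
        rw [← mul_smul, this, mul_smul, map_smul]
        rfl }
  · intro m
    change π (T _) = m
    rw [hT, ← mul_smul, MonoidAlgebra.single_mul_single, ← hu]
    simp [← MonoidAlgebra.one_def]

theorem stmt0 (S : Type*) [CommRing S] [IsLocalRing S] [IsNoetherianRing S]
    (p : ℕ) (hp : p.Prime) [CharP (IsLocalRing.ResidueField S) p]
    (G : Type*) [Group G] [Finite G] (P : Sylow p G)
    (M : Type*) [AddCommGroup M] [Module (MonoidAlgebra S G) M]
    [Module.Finite (MonoidAlgebra S G) M] :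
    Module.Projective (MonoidAlgebra S G) M ↔
      (let _i : Module (MonoidAlgebra S ↥(P : Subgroup G)) M :=
        Module.compHom M (MonoidAlgebra.mapDomainRingHom S (P : Subgroup G).subtype);
      Module.Projective (MonoidAlgebra S ↥(P : Subgroup G)) M) := by
  have hu : IsUnit ((P : Subgroup G).index : S) := by
    haveI : Fact p.Prime := ⟨hp⟩
    by_contra hn
    have h0 : IsLocalRing.residue S ((P : Subgroup G).index : S) = 0 := by
      rw [IsLocalRing.residue_eq_zero_iff]
      exact hn
    rw [map_natCast, CharP.cast_eq_zero_iff _ p] at h0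
    exact P.not_dvd_index h0
  letI : Module (MonoidAlgebra S ↥(P : Subgroup G)) M :=
    Module.compHom M (MonoidAlgebra.mapDomainRingHom S (P : Subgroup G).subtype)
  exact ⟨proj_restrict S G (P : Subgroup G) M (fun _ _ => rfl),
    proj_of_restrict S G (P : Subgroup G) hu M (fun _ _ => rfl)⟩
end

section
/- Let (O, 𝔪) be a 2-dimensional regular local Noetherian ring whose 𝔪-adic completion Ô is a unique factorization domain. Let π ∈ O be an element generating a height-one prime ideal of O, and suppose that in Ô one has a factorization π = u·t₁⋯t_m with u a unit of Ô and t₁, …, t_m pairwise non-associate prime elements of Ô. Let S = O \ πO, a multiplicatively closed subset of O. Then every element of S lies outside each of the prime ideals t_αÔ (so that S maps to units in each localization Ô_{(t_α)}), and the induced natural ring homomorphism from the π-adic completion lim_k (S^{-1}Ô)/(π^k) of the localization S^{-1}Ô to the product ∏_{α=1}^m B_α is an isomorphism, where B_α denotes the completion of the discrete valuation ring obtained by localizing Ô at the height-one prime ideal t_αÔ. -/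
/-- A regular local ring: a Noetherian local ring whose maximal ideal can be generated by
`d` elements, where `d` is the Krull dimension. -/
def IsRegularLocal (R : Type*) [CommRing R] [IsLocalRing R] : Prop :=
  IsNoetherianRing R ∧
    ∃ (n : ℕ) (f : Fin n → R), Ideal.span (Set.range f) = IsLocalRing.maximalIdeal R ∧
      (n : WithBot (WithTop ℕ)) = ringKrullDim R

section helpers

theorem evalₐ_mono {R : Type*} [CommRing R] (I : Ideal R) {m n : ℕ} (hle : m ≤ n)
    (x : AdicCompletion I R) (r : R)
    (hr : AdicCompletion.evalₐ I n x = Ideal.Quotient.mk _ r) :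
    AdicCompletion.evalₐ I m x = Ideal.Quotient.mk _ r := by
  obtain ⟨x, rfl⟩ := AdicCompletion.mk_surjective I R x
  rw [AdicCompletion.evalₐ_mk, Ideal.Quotient.eq] at hr ⊢
  have h1 := x.2 hle
  rw [SModEq.sub_mem] at h1
  have h2 := Ideal.pow_le_pow_right hle hr
  have h3 := add_mem (s := I ^ m) (by simpa using h1) h2
  simpa using h3

theorem acMap_compat {R S : Type*} [CommRing R] [CommRing S] (I : Ideal R) (M : Ideal S)
    (g : R →+* S) (h : I ≤ M.comap g) {m n : ℕ} (hle : m ≤ n) :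
    (Ideal.Quotient.factorPow M hle).comp ((Ideal.quotientMap (M ^ n) g
      ((Ideal.pow_right_mono h n).trans (Ideal.le_comap_pow g n))).comp
        (AdicCompletion.evalₐ I n : AdicCompletion I R →+* R ⧸ I ^ n)) =
    (Ideal.quotientMap (M ^ m) g
      ((Ideal.pow_right_mono h m).trans (Ideal.le_comap_pow g m))).comp
        (AdicCompletion.evalₐ I m : AdicCompletion I R →+* R ⧸ I ^ m) := by
  ext x
  obtain ⟨r, hr⟩ := Ideal.Quotient.mk_surjective (AdicCompletion.evalₐ I n x)
  have hm := evalₐ_mono I hle x r hr.symm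
  simp [← hr, hm]

/-- functoriality of adic completion in the ring. -/
noncomputable def acMap {R S : Type*} [CommRing R] [CommRing S] (I : Ideal R) (M : Ideal S)
    (g : R →+* S) (h : I ≤ M.comap g) : AdicCompletion I R →+* AdicCompletion M S :=
  AdicCompletion.liftRingHom M
    (fun n => (Ideal.quotientMap (M ^ n) g
      ((Ideal.pow_right_mono h n).trans (Ideal.le_comap_pow g n))).comp
        (AdicCompletion.evalₐ I n : AdicCompletion I R →+* R ⧸ I ^ n)) (acMap_compat I M g h)

theorem evalₐ_acMap {R S : Type*} [CommRing R] [CommRing S] (I : Ideal R) (M : Ideal S)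
    (g : R →+* S) (h : I ≤ M.comap g) (n : ℕ) (x : AdicCompletion I R) (r : R)
    (hr : AdicCompletion.evalₐ I n x = Ideal.Quotient.mk _ r) :
    AdicCompletion.evalₐ M n (acMap I M g h x) = Ideal.Quotient.mk _ (g r) := by
  rw [acMap, AdicCompletion.evalₐ_liftRingHom _ _ (acMap_compat I M g h)]
  simp [hr]

theorem acMap_algebraMap {R S : Type*} [CommRing R] [CommRing S] (I : Ideal R) (M : Ideal S)
    (g : R →+* S) (h : I ≤ M.comap g) (x : R) :
    acMap I M g h (algebraMap R _ x) = algebraMap S _ (g x) := by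
  apply AdicCompletion.ext_evalₐ
  intro n
  rw [evalₐ_acMap I M g h n _ x] <;> simp

theorem ac_noeth_aux {P O : Type*} [CommRing P] [CommRing O] (J : Ideal P) (g : P →+* O)
    (hg : Function.Surjective g) (hFG : J.FG) [IsNoetherianRing (AdicCompletion J P)] :
    IsNoetherianRing (AdicCompletion (J.map g) O) := by
  let F := acMap J (J.map g) g Ideal.le_comap_map
  let K : Ideal (AdicCompletion J P) := J.map (algebraMap P _)
  have hK : K.map F = (J.map g).map (algebraMap O _) := by
    rw [Ideal.map_map, Ideal.map_map]
    have : F.comp (algebraMap P _) = (algebraMap O _).comp g :=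
      RingHom.ext fun x => acMap_algebraMap J _ g Ideal.le_comap_map x
    rw [this]
  have := AdicCompletion.isAdicComplete_self J hFG
  have h2 := AdicCompletion.isAdicComplete_self (J.map g) (hFG.map g)
  rw [← hK] at h2
  have hs : Function.Surjective F := by
    apply surjective_of_mk_map_comp_surjective F (I := K)
    intro y
    obtain ⟨y, rfl⟩ := Ideal.Quotient.mk_surjective y
    obtain ⟨r, hr⟩ := Ideal.Quotient.mk_surjective (AdicCompletion.evalOneₐ (J.map g) y)
    obtain ⟨p, rfl⟩ := hg r
    refine ⟨algebraMap P _ p, ?_⟩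
    have e : F (algebraMap P _ p) = algebraMap O _ (g p) := acMap_algebraMap _ _ _ _ _
    rw [RingHom.comp_apply, e, Ideal.Quotient.eq, hK,
      ← AdicCompletion.ker_evalOneₐ_eq_map _ (hFG.map g)]
    change AdicCompletion.evalOneₐ (J.map g) _ = 0
    rw [map_sub, ← hr, sub_eq_zero]
    simp
  exact isNoetherianRing_of_surjective _ _ F hs

theorem ac_noeth (O : Type*) [CommRing O] [IsNoetherianRing O] (I : Ideal O) :
    IsNoetherianRing (AdicCompletion I O) := by
  obtain ⟨n, f, hf⟩ := Submodule.fg_iff_exists_fin_generating_family.mp (IsNoetherian.noetherian I)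
  have hJ : (MvPolynomial.idealOfVars (Fin n) O).map (MvPolynomial.aeval f : _ →ₐ[O] O).toRingHom
      = I := by
    rw [MvPolynomial.idealOfVars, Ideal.map_span, ← Set.range_comp, ← hf]
    simp [Function.comp_def, Ideal.span]
  have : IsNoetherianRing (AdicCompletion (MvPolynomial.idealOfVars (Fin n) O)
      (MvPolynomial (Fin n) O)) :=
    isNoetherianRing_of_ringEquiv (MvPowerSeries (Fin n) O)
      (MvPowerSeries.toAdicCompletionAlgEquiv (Fin n) O).toRingEquiv
  rw [← hJ]
  refine ac_noeth_aux _ _ (fun r => ⟨MvPolynomial.C r, by simp⟩) (MvPolynomial.idealOfVars_fg _ _)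

theorem ac_prod {L : Type*} [CommRing L] (I : Ideal L) {ι : Type*} (R : ι → Type*)
    [∀ i, CommRing (R i)] (M : ∀ i, Ideal (R i)) (g : ∀ i, L →+* R i)
    (h1 : ∀ k x, x ∈ I ^ k ↔ ∀ i, g i x ∈ M i ^ k)
    (h2 : ∀ (k : ℕ) (y : ∀ i, R i), ∃ x, ∀ i, g i x - y i ∈ M i ^ k) :
    ∃ Φ : AdicCompletion I L ≃+* ∀ i, AdicCompletion (M i) (R i),
      ∀ x, Φ (algebraMap L _ x) = fun i => algebraMap (R i) _ (g i x) := by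
  have hle : ∀ i, I ≤ (M i).comap (g i) := fun i x hx => by
    have := (h1 1 x).1 (by simpa using hx) i
    simpa using this
  let F : AdicCompletion I L →+* ∀ i, AdicCompletion (M i) (R i) :=
    RingHom.pi fun i => acMap I (M i) (g i) (hle i)
  have hF : ∀ x i, F x i = acMap I (M i) (g i) (hle i) x := fun x i => rfl
  have hbij : Function.Bijective F := by
    constructor
    · rw [injective_iff_map_eq_zero]
      intro x hx
      apply AdicCompletion.ext_evalₐ
      intro n
      obtain ⟨r, hr⟩ := Ideal.Quotient.mk_surjective (AdicCompletion.evalₐ I n x)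
      rw [map_zero, ← hr, Ideal.Quotient.eq_zero_iff_mem, h1]
      intro i
      rw [← Ideal.Quotient.eq_zero_iff_mem, ← evalₐ_acMap I (M i) (g i) (hle i) n x r hr.symm,
        ← hF, hx]
      simp
    · intro y
      choose z hz using fun n i => Ideal.Quotient.mk_surjective (AdicCompletion.evalₐ (M i) n (y i))
      choose a ha using fun n => h2 n (z n)
      have hc : ∀ m n, m ≤ n → a m - a n ∈ I ^ m := by
        intro m n hmn
        rw [h1]
        intro i
        have e1 := ha m i
        have e2 := Ideal.pow_le_pow_right hmn (ha n i)
        have e3 : z m i - z n i ∈ M i ^ m := by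
          rw [← Ideal.Quotient.eq, hz]
          exact evalₐ_mono (M i) hmn _ _ (hz n i).symm
        have := sub_mem (add_mem e1 e3) e2
        rw [map_sub]
        convert this using 1
        ring
      let s : AdicCompletion.AdicCauchySequence I L := ⟨a, by
        intro m n hmn
        rw [SModEq.sub_mem]
        simpa using hc m n hmn⟩
      refine ⟨AdicCompletion.mk I L s, ?_⟩
      funext i
      apply AdicCompletion.ext_evalₐ
      intro n
      rw [hF, evalₐ_acMap I (M i) (g i) (hle i) n _ (a n), ← hz, Ideal.Quotient.eq]
      · exact ha n i
      · rw [AdicCompletion.evalₐ_mk]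
  refine ⟨RingEquiv.ofBijective F hbij, fun x => ?_⟩
  rw [RingEquiv.ofBijective_apply]
  funext i
  exact acMap_algebraMap I (M i) (g i) (hle i) x

theorem key_radical {A : Type*} [CommRing A] [IsDomain A] [IsLocalRing A] [IsNoetherianRing A]
    (hht : (IsLocalRing.maximalIdeal A).height ≤ 2) (t z : A) (ht : Prime t)
    (hz : z ∉ Ideal.span {t}) (k : ℕ) :
    IsLocalRing.maximalIdeal A ≤ (Ideal.span {z, t ^ k}).radical := by
  rw [Ideal.radical_eq_sInf]
  refine le_sInf ?_
  rintro p ⟨hp, hprime⟩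
  by_contra hcon
  have hzp : z ∈ p := hp (Ideal.subset_span (by simp))
  have htp : t ∈ p := hprime.mem_of_pow_mem k (hp (Ideal.subset_span (by simp)))
  have htP : (Ideal.span {t}).IsPrime := (Ideal.span_singleton_prime ht.ne_zero).mpr ht
  have h1 : Ideal.span {t} < p := by
    refine lt_of_le_of_ne ((Ideal.span_singleton_le_iff_mem _).2 htp) ?_
    rintro rfl
    exact hz hzp
  have h2 : p < IsLocalRing.maximalIdeal A :=
    lt_of_le_not_ge (IsLocalRing.le_maximalIdeal hprime.ne_top) hcon
  have h0 : (⊥ : Ideal A) < Ideal.span {t} := by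
    rw [bot_lt_iff_ne_bot]
    simpa using ht.ne_zero
  have e0 := Ideal.height_strict_mono_of_isPrime h0
  have e1 := Ideal.height_strict_mono_of_isPrime h1
  have e2 := Ideal.height_strict_mono_of_isPrime h2
  have f0 := Order.add_one_le_of_lt e0
  have f1 := Order.add_one_le_of_lt e1
  have f2 := Order.add_one_le_of_lt e2
  have : ((3 : ℕ) : ℕ∞) ≤ (2 : ℕ) := by
    calc ((3 : ℕ) : ℕ∞) = 0 + 1 + 1 + 1 := by norm_num
      _ ≤ (⊥ : Ideal A).height + 1 + 1 + 1 := by gcongr; exact bot_le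
      _ ≤ (Ideal.span {t}).height + 1 + 1 := by gcongr
      _ ≤ p.height + 1 := by gcongr
      _ ≤ _ := f2.trans hht
  exact absurd (Nat.cast_le.1 this) (by norm_num)

theorem prod_pow_dvd {A : Type*} [CommRing A] [IsDomain A] {ι : Type*} (s : Finset ι)
    (t : ι → A) (ht : ∀ i, Prime (t i)) (hna : ∀ i j, i ≠ j → ¬ Associated (t i) (t j))
    (k : ℕ) (x : A) (h : ∀ i ∈ s, t i ^ k ∣ x) : ∏ i ∈ s, t i ^ k ∣ x := by
  classical
  induction s using Finset.induction_on with
  | empty => simp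
  | insert a s ha ih =>
    obtain ⟨y, rfl⟩ := ih (fun i hi => h i (Finset.mem_insert_of_mem hi))
    rw [Finset.prod_insert ha, mul_comm]
    refine mul_dvd_mul_left _ ?_
    refine (ht a).pow_dvd_of_dvd_mul_left k ?_ (h a (Finset.mem_insert_self _ _))
    intro hd
    obtain ⟨i, hi, hd⟩ := (ht a).exists_mem_finset_dvd hd
    refine hna a i (by rintro rfl; exact ha hi) ?_
    exact (ht a).associated_of_dvd (ht i) ((ht a).dvd_of_dvd_pow hd)

theorem main_aux {A : Type*} [CommRing A] [IsDomain A] (T : Submonoid A) (m : ℕ) (u : Aˣ) (p : A)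
    (t : Fin m → A) (ht : ∀ α, Prime (t α)) [hall : ∀ α, (Ideal.span {t α}).IsPrime]
    (hna : ∀ i j, i ≠ j → ¬ Associated (t i) (t j)) (hp : p = u * ∏ α, t α)
    (hT : ∀ α, ∀ s ∈ T, s ∉ Ideal.span {t α})
    (hkey : ∀ α z, z ∉ Ideal.span {t α} → ∀ k, ∃ s ∈ T, ∃ c d, s = c * z + d * t α ^ k) :
    ∃ Φ : AdicCompletion (Ideal.span {algebraMap A (Localization T) p}) (Localization T) ≃+*
        ∀ α : Fin m, AdicCompletion
            (IsLocalRing.maximalIdeal (Localization.AtPrime (Ideal.span {t α})))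
            (Localization.AtPrime (Ideal.span {t α})),
      ∀ x : A, Φ (algebraMap (Localization T) _ (algebraMap A (Localization T) x)) =
        fun α => algebraMap (Localization.AtPrime (Ideal.span {t α})) _
          (algebraMap A (Localization.AtPrime (Ideal.span {t α})) x) := by
  classical
  have hu : ∀ α, ∀ s : T, IsUnit (algebraMap A (Localization.AtPrime (Ideal.span {t α})) s) :=
    fun α s => IsLocalization.map_units (M := (Ideal.span {t α}).primeCompl) _ ⟨s, hT α s s.2⟩
  let g : ∀ α, Localization T →+* Localization.AtPrime (Ideal.span {t α}) := fun α =>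
    IsLocalization.lift (M := T) (hu α)
  have hg : ∀ α x, g α (algebraMap A _ x) = algebraMap A _ x := fun α x =>
    IsLocalization.lift_eq (hu α) x
  have hM : ∀ α k, IsLocalRing.maximalIdeal (Localization.AtPrime (Ideal.span {t α})) ^ k =
      Ideal.span {algebraMap A _ (t α ^ k)} := by
    intro α k
    rw [← Localization.AtPrime.map_eq_maximalIdeal, Ideal.map_span, Set.image_singleton,
      Ideal.span_singleton_pow, map_pow]
  have hmem : ∀ α k x, algebraMap A (Localization.AtPrime (Ideal.span {t α})) x ∈
      IsLocalRing.maximalIdeal (Localization.AtPrime (Ideal.span {t α})) ^ k ↔ t α ^ k ∣ x := by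
    intro α k x
    rw [hM]
    constructor
    · intro h
      have h' : algebraMap A (Localization.AtPrime (Ideal.span {t α})) x ∈
          (Ideal.span {t α ^ k}).map (algebraMap A _) := by
        rw [Ideal.map_span, Set.image_singleton]
        exact h
      rw [IsLocalization.algebraMap_mem_map_algebraMap_iff (Ideal.span {t α}).primeCompl] at h'
      obtain ⟨y, hy, h⟩ := h'
      rw [Ideal.mem_span_singleton] at h
      refine (ht α).pow_dvd_of_dvd_mul_left k ?_ h
      rw [← Ideal.mem_span_singleton]
      exact hy
    · intro h
      rw [Ideal.mem_span_singleton]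
      exact map_dvd _ h
  refine (ac_prod (Ideal.span {algebraMap A (Localization T) p}) _
    (fun α => IsLocalRing.maximalIdeal (Localization.AtPrime (Ideal.span {t α}))) g ?_ ?_).elim
      fun Φ hΦ => ⟨Φ, fun x => by rw [hΦ]; simp only [hg]⟩
  · intro k x
    obtain ⟨x, s, rfl⟩ := IsLocalization.exists_mk'_eq T x
    have hs : IsUnit (algebraMap A (Localization T) s) := IsLocalization.map_units _ s
    have hx : IsLocalization.mk' (Localization T) x s * algebraMap A _ s = algebraMap A _ x :=
      IsLocalization.mk'_spec _ _ _
    have l1 : IsLocalization.mk' (Localization T) x s ∈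
        Ideal.span {algebraMap A (Localization T) p} ^ k ↔ algebraMap A _ x ∈
        Ideal.span {algebraMap A (Localization T) p} ^ k := by
      rw [← hx, Ideal.mul_unit_mem_iff_mem _ hs]
    have l2 : ∀ α, g α (IsLocalization.mk' (Localization T) x s) ∈
        IsLocalRing.maximalIdeal (Localization.AtPrime (Ideal.span {t α})) ^ k ↔ t α ^ k ∣ x := by
      intro α
      rw [← hmem, ← hg α x, ← hx, map_mul, Ideal.mul_unit_mem_iff_mem _ (hs.map (g α))]
    rw [l1]
    simp only [l2]
    rw [Ideal.span_singleton_pow, Ideal.mem_span_singleton, ← map_pow]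
    have hpk : p ^ k = (u ^ k : Aˣ) * ∏ α, t α ^ k := by
      rw [hp, mul_pow, Finset.prod_pow]; simp
    constructor
    · intro h α
      have : g α (algebraMap A _ (p ^ k)) ∣ g α (algebraMap A _ x) := map_dvd (g α) h
      rw [hg, hg] at this
      rw [← hmem]
      refine Ideal.mem_of_dvd _ this ?_
      rw [hmem, hpk]
      exact (Finset.dvd_prod_of_mem _ (Finset.mem_univ α)).mul_left _
    · intro h
      refine map_dvd _ ?_
      rw [hpk, Units.mul_left_dvd]
      exact prod_pow_dvd _ t ht hna k x (fun i _ => h i)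
  · intro k y
    -- approximate one coordinate at a time
    have one : ∀ α, ∃ x : Localization T, g α x - y α ∈
          IsLocalRing.maximalIdeal (Localization.AtPrime (Ideal.span {t α})) ^ k ∧
        ∀ β, β ≠ α → g β x ∈
          IsLocalRing.maximalIdeal (Localization.AtPrime (Ideal.span {t β})) ^ k := by
      intro α
      obtain ⟨a, b, hab⟩ := IsLocalization.exists_mk'_eq (Ideal.span {t α}).primeCompl (y α)
      have hb : (b : A) ∉ Ideal.span {t α} := b.2
      let e : A := ∏ β ∈ Finset.univ.erase α, t β ^ k
      have he : e ∉ Ideal.span {t α} := by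
        rw [Ideal.mem_span_singleton]
        intro hd
        obtain ⟨i, hi, hd⟩ := (ht α).exists_mem_finset_dvd hd
        refine hna α i (Finset.ne_of_mem_erase hi).symm ?_
        exact (ht α).associated_of_dvd (ht i) ((ht α).dvd_of_dvd_pow hd)
      have hbe : (b : A) * e ∉ Ideal.span {t α} := fun h => ((hall α).mem_or_mem h).elim hb he
      obtain ⟨s, hs, c, d, hscd⟩ := hkey α _ hbe k
      have hsu : ∀ β, IsUnit (algebraMap A (Localization.AtPrime (Ideal.span {t β})) s) :=
        fun β => hu β ⟨s, hs⟩
      have hx : IsLocalization.mk' (Localization T) (a * c * e) (⟨s, hs⟩ : T) *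
          algebraMap A _ s = algebraMap A _ (a * c * e) :=
        IsLocalization.mk'_spec _ _ (⟨s, hs⟩ : T)
      have hxg : ∀ β, g β (IsLocalization.mk' (Localization T) (a * c * e) (⟨s, hs⟩ : T)) *
          algebraMap A _ s = algebraMap A _ (a * c * e) := by
        intro β
        rw [← hg β s, ← map_mul, hx, hg]
      refine ⟨IsLocalization.mk' (Localization T) (a * c * e) (⟨s, hs⟩ : T), ?_, ?_⟩
      · have hbu : IsUnit (algebraMap A (Localization.AtPrime (Ideal.span {t α})) b) :=
          IsLocalization.map_units _ b
        rw [← Ideal.mul_unit_mem_iff_mem _ (hsu α), ← Ideal.mul_unit_mem_iff_mem _ hbu, sub_mul,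
          hxg, sub_mul, mul_right_comm (y α)]
        have hy : y α * algebraMap A _ b = algebraMap A _ a := by
          rw [← hab]; exact IsLocalization.mk'_spec _ _ _
        rw [hy, ← map_mul, ← map_mul, ← map_sub, hmem]
        refine ⟨- a * d, ?_⟩
        rw [hscd]; ring
      · intro β hβ
        rw [← Ideal.mul_unit_mem_iff_mem _ (hsu β), hxg, hmem]
        exact (Finset.dvd_prod_of_mem (fun β => t β ^ k)
          (Finset.mem_erase.2 ⟨hβ, Finset.mem_univ β⟩)).mul_left _
    choose x hx1 hx2 using one
    refine ⟨∑ α, x α, fun α => ?_⟩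
    rw [map_sum, ← Finset.add_sum_erase _ _ (Finset.mem_univ α), add_sub_right_comm]
    refine add_mem (hx1 α) (sum_mem fun β hβ => hx2 β α (Finset.ne_of_mem_erase hβ).symm)

theorem not_mem_aux {O A : Type*} [CommRing O] [CommRing A] [IsDomain A] [Algebra O A]
    [Module.Flat O A] (π : O) (hπprime : (Ideal.span {π}).IsPrime) (m : ℕ) (u : Aˣ)
    (t : Fin m → A) (ht : ∀ α, Prime (t α))
    (hna : ∀ i j, i ≠ j → ¬ Associated (t i) (t j)) (hfact : algebraMap O A π = u * ∏ α, t α)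
    (α : Fin m) (s : O) (hs : s ∉ Ideal.span {π}) : algebraMap O A s ∉ Ideal.span {t α} := by
  classical
  intro h
  rw [Ideal.mem_span_singleton] at h
  obtain ⟨w, hw⟩ := h
  let e : A := ∏ β ∈ Finset.univ.erase α, t β
  have he : ¬ t α ∣ e := by
    intro hd
    obtain ⟨i, hi, hd⟩ := (ht α).exists_mem_finset_dvd hd
    exact hna α i (Finset.ne_of_mem_erase hi).symm ((ht α).associated_of_dvd (ht i) hd)
  have hprod : ∏ β, t β = t α * e := (Finset.mul_prod_erase _ _ (Finset.mem_univ α)).symm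
  have hrel : ∑ i : Fin 2, (![s, -π] : Fin 2 → O) i • (![e, (↑u⁻¹ : A) * w] : Fin 2 → A) i = 0 := by
    simp only [Fin.sum_univ_two, Algebra.smul_def]
    simp only [Matrix.cons_val_zero, Matrix.cons_val_one, map_neg, hw, hfact, hprod]
    have := u.mul_inv
    linear_combination (- t α * e * w) * this
  obtain ⟨k, a, y, hx, ha⟩ := Module.Flat.isTrivialRelation_of_sum_smul_eq_zero (R := O) (M := A) hrel
  have hdiv : ∀ j, π ∣ a 0 j := by
    intro j
    have := ha j
    simp only [Fin.sum_univ_two, Matrix.cons_val_zero, Matrix.cons_val_one] at this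
    have h2 : s * a 0 j ∈ Ideal.span {π} := by
      rw [Ideal.mem_span_singleton]
      exact ⟨a 1 j, by linear_combination this⟩
    exact Ideal.mem_span_singleton.1 ((hπprime.mem_or_mem h2).resolve_left hs)
  apply he
  have h0 := hx 0
  simp only [Matrix.cons_val_zero] at h0
  rw [h0]
  refine Finset.dvd_sum fun j _ => ?_
  rw [Algebra.smul_def]
  refine Dvd.dvd.mul_right ?_ _
  refine dvd_trans ?_ (map_dvd (algebraMap O A) (hdiv j))
  rw [hfact, hprod]
  exact (dvd_mul_right _ _).mul_left _

theorem height_aux (O : Type*) [CommRing O] [IsLocalRing O] [IsNoetherianRing O]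
    [IsNoetherianRing (AdicCompletion (IsLocalRing.maximalIdeal O) O)]
    (f : Fin 2 → O) (hf : Ideal.span (Set.range f) = IsLocalRing.maximalIdeal O) :
    (IsLocalRing.maximalIdeal (AdicCompletion (IsLocalRing.maximalIdeal O) O)).height ≤ 2 := by
  refine (Ideal.height_le_spanFinrank _ Ideal.IsPrime.ne_top').trans ?_
  rw [AdicCompletion.spanFinrank_maximalIdeal_eq, ← hf]
  have h1 := Submodule.spanFinrank_span_le_ncard_of_finite (R := O) (Set.finite_range f)
  have h2 : (Set.range f).ncard ≤ 2 := by
    rw [← Set.image_univ]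
    refine (Set.ncard_image_le Set.finite_univ).trans ?_
    simp
  exact_mod_cast h1.trans h2

theorem not_le_aux (O : Type*) [CommRing O] [IsLocalRing O] [IsNoetherianRing O]
    (hdim : ringKrullDim O = 2) (π : O) (hπprime : (Ideal.span {π}).IsPrime) :
    ¬ IsLocalRing.maximalIdeal O ≤ Ideal.span {π} := by
  intro h
  have h1 := le_antisymm h (IsLocalRing.le_maximalIdeal hπprime.ne_top)
  have h2 : (Ideal.span {π}).height ≤ 1 := by
    refine Ideal.height_span_singleton_le_one ?_
    intro hu
    exact hπprime.ne_top (Ideal.span_singleton_eq_top.2 hu)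
  rw [← IsLocalRing.maximalIdeal_height_eq_ringKrullDim, h1] at hdim
  have h3 : (Ideal.span {π}).height = 2 := by 
    have : ((Ideal.span {π}).height : WithBot ℕ∞) = ((2 : ℕ∞) : WithBot ℕ∞) := hdim
    exact WithBot.coe_injective this
  rw [h3] at h2
  exact absurd h2 (by norm_num)

end helpers

theorem stmt13 (O : Type*) [CommRing O] [IsLocalRing O]
    (hreg : IsRegularLocal O) (hdim : ringKrullDim O = 2)
    -- the completion `Ô` is a unique factorization domain
    [IsDomain (AdicCompletion (IsLocalRing.maximalIdeal O) O)]
    [UniqueFactorizationMonoid (AdicCompletion (IsLocalRing.maximalIdeal O) O)]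
    -- `π` generates a height-one prime ideal of `O`
    (π : O) (hπprime : (Ideal.span {π}).IsPrime)
    (hπht : Order.height (⟨Ideal.span {π}, hπprime⟩ : PrimeSpectrum O) = 1)
    -- the factorization `π = u·t₁⋯t_m` into pairwise non-associate primes in `Ô`
    (m : ℕ) (u : (AdicCompletion (IsLocalRing.maximalIdeal O) O)ˣ)
    (t : Fin m → AdicCompletion (IsLocalRing.maximalIdeal O) O)
    (ht : ∀ α, Prime (t α))
    (htnonassoc : ∀ α α', α ≠ α' → ¬ Associated (t α) (t α'))
    (hfact : algebraMap O (AdicCompletion (IsLocalRing.maximalIdeal O) O) π =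
      (u : AdicCompletion (IsLocalRing.maximalIdeal O) O) * ∏ α, t α) :
    letI := hπprime
    letI hall : ∀ α, (Ideal.span {t α}).IsPrime :=
      fun α => (Ideal.span_singleton_prime (ht α).ne_zero).mpr (ht α)
    -- `S = O \ πO`
    let S : Submonoid O := (Ideal.span {π}).primeCompl
    -- `S⁻¹Ô`, the localization of `Ô` at (the image of) `S`
    let L := Localization (S.map (algebraMap O (AdicCompletion (IsLocalRing.maximalIdeal O) O)))
    -- the `π`-adic completion of `S⁻¹Ô`
    let C := AdicCompletion
      (Ideal.span {algebraMap (AdicCompletion (IsLocalRing.maximalIdeal O) O) L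
        (algebraMap O (AdicCompletion (IsLocalRing.maximalIdeal O) O) π)}) L
    -- claim 1: every element of `S` lies outside each prime `t_αÔ`
    ((∀ (α : Fin m), ∀ s ∈ S,
        algebraMap O (AdicCompletion (IsLocalRing.maximalIdeal O) O) s ∉ Ideal.span {t α}) ∧
    -- claim 2: the natural map `C → ∏ B_α` is an isomorphism, i.e. there is a ring
    -- isomorphism compatible with the canonical maps from `Ô`
      ∃ Φ : C ≃+* ∀ α : Fin m,
          AdicCompletion
            (IsLocalRing.maximalIdeal (Localization.AtPrime (Ideal.span {t α})))
            (Localization.AtPrime (Ideal.span {t α})),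
        ∀ x : AdicCompletion (IsLocalRing.maximalIdeal O) O,
          Φ (algebraMap L C (algebraMap (AdicCompletion (IsLocalRing.maximalIdeal O) O) L x)) =
            fun α => algebraMap (Localization.AtPrime (Ideal.span {t α}))
              (AdicCompletion
                (IsLocalRing.maximalIdeal (Localization.AtPrime (Ideal.span {t α})))
                (Localization.AtPrime (Ideal.span {t α})))
              (algebraMap (AdicCompletion (IsLocalRing.maximalIdeal O) O)
                (Localization.AtPrime (Ideal.span {t α})) x)) := by
  intro S L C
  obtain ⟨hN, n, f, hf, hn⟩ := hreg
  have hn2 : n = 2 := by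
    rw [hdim] at hn
    have h2 : ((n : ℕ∞) : WithBot ℕ∞) = (((2 : ℕ) : ℕ∞) : WithBot ℕ∞) := hn
    exact Nat.cast_injective (WithBot.coe_injective h2)
  subst hn2
  have hNA := ac_noeth O (IsLocalRing.maximalIdeal O)
  have hht := height_aux O f hf
  have hS : ∀ (α : Fin m), ∀ s ∈ S,
      algebraMap O (AdicCompletion (IsLocalRing.maximalIdeal O) O) s ∉ Ideal.span {t α} :=
    fun α s hs => not_mem_aux π hπprime m u t ht htnonassoc hfact α s hs
  refine ⟨hS, ?_⟩
  refine @main_aux _ _ _ _ m u _ t ht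
    (fun α => (Ideal.span_singleton_prime (ht α).ne_zero).mpr (ht α)) htnonassoc hfact ?_ ?_
  · rintro α _ ⟨s, hs, rfl⟩
    exact hS α s hs
  · intro α z hz k
    obtain ⟨s, hsm, hs⟩ := SetLike.not_le_iff_exists.1 (not_le_aux O hdim π hπprime)
    have h1 : algebraMap O (AdicCompletion (IsLocalRing.maximalIdeal O) O) s ∈
        IsLocalRing.maximalIdeal (AdicCompletion (IsLocalRing.maximalIdeal O) O) := by
      rw [AdicCompletion.maximalIdeal_eq_map]
      exact Ideal.mem_map_of_mem _ hsm
    obtain ⟨N, hN⟩ := key_radical hht (t α) z (ht α) hz k h1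
    obtain ⟨c, d, hcd⟩ := Ideal.mem_span_pair.1 hN
    refine ⟨_, ⟨s ^ N, ?_, rfl⟩, c, d, ?_⟩
    · exact S.pow_mem hs N
    · rw [hcd]; exact map_pow _ _ _
end

section
/- Let (O, 𝔪) be a 2-dimensional regular local Noetherian domain which is a flat ℤ-algebra with finite residue field of characteristic p, and let Ô denote its 𝔪-adic completion. Suppose that in O one has a factorization p = v·∏_{i=1}^{j} πᵢ^{aᵢ} with v a unit of O, j ≥ 1, and π₁, …, π_j pairwise non-associate irreducible elements of O, and that π₁ generates a prime ideal of O. Suppose further that in Ô one has π₁ = u·t₁⋯t_m with u a unit of Ô and t₁, …, t_m pairwise non-associate prime elements of Ô. Fix α ∈ {1,…,m} and let B_α denote the completion of the discrete valuation ring obtained by localizing Ô at the height-one prime ideal t_αÔ. Then t_α·B_α = p·B_α if and only if a₁ = 1, equivalently if and only if p generates the maximal ideal of the localization of O at the prime ideal π₁O. -/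
open IsLocalRing

/-- In a completion of a local ring with principal maximal ideal `(t)`. -/
theorem aux_completion {A : Type*} [CommRing A] [IsLocalRing A] (t : A)
    (hm : maximalIdeal A = Ideal.span {t}) (ht : t ≠ 0) (p : ℕ) (w : A) (hw : IsUnit w) (a : ℕ)
    (hp : (p : A) = w * t ^ a) :
    Ideal.span {algebraMap A (AdicCompletion (maximalIdeal A) A) t} =
      Ideal.span {(p : AdicCompletion (maximalIdeal A) A)} ↔ a = 1 := by
  have hpB : (p : AdicCompletion (maximalIdeal A) A) =
      algebraMap A (AdicCompletion (maximalIdeal A) A) w * algebraMap A _ t ^ a := by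
    rw [← map_pow, ← map_mul, ← hp, map_natCast]
  have hwB := hw.map (algebraMap A (AdicCompletion (maximalIdeal A) A))
  have hspan : Ideal.span {(p : AdicCompletion (maximalIdeal A) A)} =
      Ideal.span {algebraMap A (AdicCompletion (maximalIdeal A) A) t ^ a} := by
    rw [hpB, Ideal.span_singleton_mul_left_unit hwB]
  rw [hspan]
  have htm : t ∈ maximalIdeal A := hm ▸ Ideal.mem_span_singleton_self t
  constructor
  · intro h
    have h1 : algebraMap A (AdicCompletion (maximalIdeal A) A) t ∣ algebraMap A _ t ^ a :=
      Ideal.span_singleton_le_span_singleton.mp h.ge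
    have h2 : algebraMap A (AdicCompletion (maximalIdeal A) A) t ^ a ∣ algebraMap A _ t :=
      Ideal.span_singleton_le_span_singleton.mp h.le
    rcases a with _ | _ | a
    · exfalso
      have h3 := map_dvd (AdicCompletion.evalₐ (maximalIdeal A) 1) h1
      simp only [pow_zero, map_one, AlgHom.commutes] at h3
      have h4 : algebraMap A (A ⧸ maximalIdeal A ^ 1) t = 0 :=
        Ideal.Quotient.eq_zero_iff_mem.mpr (by simpa using htm)
      rw [h4, zero_dvd_iff] at h3
      have h5 : (1 : A) ∈ maximalIdeal A ^ 1 := Ideal.Quotient.eq_zero_iff_mem.mp h3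
      rw [pow_one] at h5
      exact (Ideal.ne_top_iff_one _).mp (maximalIdeal.isMaximal A).ne_top h5
    · rfl
    · exfalso
      have h3 := map_dvd (AdicCompletion.evalₐ (maximalIdeal A) 2) h2
      simp only [map_pow, AlgHom.commutes] at h3
      have h4 : algebraMap A (A ⧸ maximalIdeal A ^ 2) t ^ (a + 1 + 1) = 0 := by
        rw [← map_pow]
        refine Ideal.Quotient.eq_zero_iff_mem.mpr (Ideal.pow_le_pow_right ?_ (Ideal.pow_mem_pow htm _))
        omega
      rw [h4, zero_dvd_iff] at h3
      have h5 : t ∈ maximalIdeal A ^ 2 := Ideal.Quotient.eq_zero_iff_mem.mp h3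
      rw [hm, Ideal.span_singleton_pow, Ideal.mem_span_singleton] at h5
      obtain ⟨c, hc⟩ := h5
      have h6 : IsUnit (1 - t * c) := by
        by_contra hu
        have h7 : (1 - t * c) ∈ maximalIdeal A := hu
        have := (maximalIdeal A).add_mem h7 (Ideal.mul_mem_right c _ htm)
        rw [sub_add_cancel] at this
        exact (Ideal.ne_top_iff_one _).mp (maximalIdeal.isMaximal A).ne_top this
      apply ht
      rw [← h6.mul_left_inj, zero_mul]
      linear_combination hc
  · rintro rfl
    rw [pow_one]

/-- Divisibility between primes of a local ring forces associatedness. -/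
theorem aux_assoc {R : Type*} [CommRing R] [IsLocalRing R] {s t : R} (hs : Prime s) (ht : Prime t)
    (h : t ∣ s) : Associated t s := by
  have key : ∀ x y : R, x ≠ 0 → x * (1 - y) = 0 → IsUnit y := by
    intro x y hx hxy
    by_contra hy
    have : IsUnit (1 - y) := by
      rcases IsLocalRing.isUnit_or_isUnit_one_sub_self y with h | h
      · exact absurd h hy
      · exact h
    exact hx (by rwa [this.mul_left_eq_zero] at hxy)
  obtain ⟨c, hc⟩ := h
  rcases hs.dvd_or_dvd (dvd_of_eq hc) with ⟨d, hd⟩ | ⟨d, hd⟩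
  · have : IsUnit (c * d) := key t _ ht.ne_zero (by linear_combination hd + d * hc)
    obtain ⟨w, hw⟩ := isUnit_of_mul_isUnit_left this
    exact ⟨w, by rw [hw, hc]⟩
  · exact absurd (isUnit_of_mul_isUnit_left (key s (t * d) hs.ne_zero
      (by linear_combination hc + t * hd))) ht.not_isUnit

theorem aux_contract {O : Type*} [CommRing O] [IsDomain O] [IsLocalRing O] [IsNoetherianRing O]
    (hdim : ringKrullDim O = 2) (q : O) (hq0 : q ≠ 0) (hq : (Ideal.span {q}).IsPrime)
    (t : AdicCompletion (maximalIdeal O) O) (ht : Prime t)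
    (hdvd : t ∣ algebraMap O _ q) (x : O) (hx : t ∣ algebraMap O _ x) : q ∣ x := by
  have hpt : (Ideal.span {t}).IsPrime := (Ideal.span_singleton_prime ht.ne_zero).mpr ht
  set P := (Ideal.span {t}).comap (algebraMap O (AdicCompletion (maximalIdeal O) O)) with hP
  have hPp : P.IsPrime := Ideal.IsPrime.comap _
  have hqP : q ∈ P := Ideal.mem_span_singleton.mpr hdvd
  have hxP : x ∈ P := Ideal.mem_span_singleton.mpr hx
  by_contra hcon
  have hlt : Ideal.span {q} < P := by
    refine lt_of_le_of_ne ((Ideal.span_singleton_le_iff_mem _).mpr hqP) ?_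
    intro h
    rw [← h] at hxP
    exact hcon (Ideal.mem_span_singleton.mp hxP)
  have hbot : (⊥ : Ideal O) < Ideal.span {q} := by
    rw [bot_lt_iff_ne_bot]
    simpa using hq0
  have hPm : P = maximalIdeal O := by
    by_contra hne
    have hlt2 : P < maximalIdeal O := lt_of_le_of_ne (le_maximalIdeal hPp.ne_top) hne
    have h1 := Ideal.height_add_one_le_of_lt_of_isPrime hbot
    have h2 := Ideal.height_add_one_le_of_lt_of_isPrime hlt
    have h3 := Ideal.height_add_one_le_of_lt_of_isPrime hlt2
    have h4 : (maximalIdeal O).height = 2 := by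
      have := maximalIdeal_height_eq_ringKrullDim (R := O)
      rw [hdim] at this
      exact WithBot.coe_injective this
    have h5 : (3 : ℕ∞) ≤ 2 := by
      rw [← h4]
      refine le_trans ?_ h3
      refine le_trans ?_ (add_le_add_left h2 1)
      refine le_trans ?_ (add_le_add_left (add_le_add_left h1 1) 1)
      refine le_trans ?_ (add_le_add_left (add_le_add_left (add_le_add_left zero_le 1) 1) 1)
      norm_num
    exact absurd h5 (by decide)
  have hmax : maximalIdeal (AdicCompletion (maximalIdeal O) O) = Ideal.span {t} := by
    apply le_antisymm
    · rw [AdicCompletion.maximalIdeal_eq_map, Ideal.map_le_iff_le_comap]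
      exact hPm.ge
    · exact le_maximalIdeal hpt.ne_top
  have h1 : (maximalIdeal O).spanFinrank ≤ 1 := by
    rw [← AdicCompletion.spanFinrank_maximalIdeal_eq, hmax]
    refine (Submodule.spanFinrank_span_le_ncard_of_finite (Set.finite_singleton t)).trans ?_
    simp
  have h2 := ringKrullDim_le_spanFinrank_maximalIdeal (R := O)
  rw [hdim] at h2
  have : (2 : WithBot ℕ∞) ≤ 1 := h2.trans (by exact_mod_cast h1)
  exact absurd this (by decide)

theorem aux_dvr {A : Type*} [CommRing A] [IsDomain A] [IsLocalRing A] (t : A)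
    (hm : maximalIdeal A = Ideal.span {t}) (ht : t ≠ 0) (p : ℕ) (w : A) (hw : IsUnit w) (a : ℕ)
    (hp : (p : A) = w * t ^ a) :
    maximalIdeal A = Ideal.span {(p : A)} ↔ a = 1 := by
  have htu : ¬ IsUnit t := by
    have : t ∈ maximalIdeal A := hm ▸ Ideal.mem_span_singleton_self t
    exact this
  rw [hm, hp, Ideal.span_singleton_mul_left_unit hw]
  constructor
  · intro h
    have h2 : t ^ a ∣ t ^ 1 := by
      simpa using Ideal.span_singleton_le_span_singleton.mp h.le
    have h1 : t ^ 1 ∣ t ^ a := by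
      simpa using Ideal.span_singleton_le_span_singleton.mp h.ge
    rw [pow_dvd_pow_iff ht htu] at h1 h2
    omega
  · rintro rfl
    rw [pow_one]

theorem aux_locMax {R : Type*} [CommRing R] (t : R) [h : (Ideal.span {t}).IsPrime] :
    maximalIdeal (Localization.AtPrime (Ideal.span {t})) =
      Ideal.span {algebraMap R (Localization.AtPrime (Ideal.span {t})) t} := by
  rw [← Localization.AtPrime.map_eq_maximalIdeal, Ideal.map_span, Set.image_singleton]

theorem aux_locUnit {R : Type*} [CommRing R] (t : R) [h : (Ideal.span {t}).IsPrime] (x : R)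
    (hx : ¬ t ∣ x) : IsUnit (algebraMap R (Localization.AtPrime (Ideal.span {t})) x) :=
  IsLocalization.map_units (Localization.AtPrime (Ideal.span {t}))
    (⟨x, fun hm => hx (Ideal.mem_span_singleton.mp hm)⟩ : (Ideal.span {t}).primeCompl)

theorem stmt14 (O : Type*) [CommRing O] [IsDomain O] [IsLocalRing O]
    (hreg : IsRegularLocal O) (hdim : ringKrullDim O = 2)
    (hflat : Module.Flat ℤ O)
    (p : ℕ) (hp : p.Prime)
    [Finite (IsLocalRing.ResidueField O)] [CharP (IsLocalRing.ResidueField O) p]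
    -- the factorization `p = v·∏ᵢ πᵢ^{aᵢ}` in `O`, with the `πᵢ` pairwise non-associate
    -- irreducible elements and `π₁ = π 0` generating a prime ideal
    (j : ℕ) (hj : 0 < j) (v : Oˣ) (π : Fin j → O) (a : Fin j → ℕ)
    (hirr : ∀ i, Irreducible (π i))
    (hnonassoc : ∀ i i', i ≠ i' → ¬ Associated (π i) (π i'))
    (hfact : (p : O) = (v : O) * ∏ i, π i ^ a i)
    (hπ₁ : (Ideal.span {π ⟨0, hj⟩}).IsPrime)
    -- the factorization `π₁ = u·t₁⋯t_m` into pairwise non-associate primes in `Ô`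
    (m : ℕ) (u : (AdicCompletion (IsLocalRing.maximalIdeal O) O)ˣ)
    (t : Fin m → AdicCompletion (IsLocalRing.maximalIdeal O) O)
    (ht : ∀ α, Prime (t α))
    (htnonassoc : ∀ α α', α ≠ α' → ¬ Associated (t α) (t α'))
    (hfact' : algebraMap O (AdicCompletion (IsLocalRing.maximalIdeal O) O) (π ⟨0, hj⟩) =
      (u : AdicCompletion (IsLocalRing.maximalIdeal O) O) * ∏ α, t α)
    -- fix a branch `α`
    (α : Fin m) :
    -- `B_α` is the completion of the localization of `Ô` at the height-one prime `(t_α)`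
    letI hpα : (Ideal.span {t α}).IsPrime :=
      (Ideal.span_singleton_prime (ht α).ne_zero).mpr (ht α)
    let Oloc := Localization.AtPrime (Ideal.span {t α})
    let Bα := AdicCompletion (IsLocalRing.maximalIdeal Oloc) Oloc
    letI hπp : (Ideal.span {π ⟨0, hj⟩}).IsPrime := hπ₁
    ((Ideal.span {algebraMap Oloc Bα
          (algebraMap (AdicCompletion (IsLocalRing.maximalIdeal O) O) Oloc (t α))} =
        Ideal.span {(p : Bα)}) ↔ a ⟨0, hj⟩ = 1) ∧
    ((Ideal.span {algebraMap Oloc Bα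
          (algebraMap (AdicCompletion (IsLocalRing.maximalIdeal O) O) Oloc (t α))} =
        Ideal.span {(p : Bα)}) ↔
      IsLocalRing.maximalIdeal (Localization.AtPrime (Ideal.span {π ⟨0, hj⟩})) =
        Ideal.span {(p : Localization.AtPrime (Ideal.span {π ⟨0, hj⟩}))}) := by
  intro Oloc Bα
  have hpα : (Ideal.span {t α}).IsPrime :=
    (Ideal.span_singleton_prime (ht α).ne_zero).mpr (ht α)
  have : IsNoetherianRing O := hreg.1
  set i₀ : Fin j := ⟨0, hj⟩ with hi₀
  have hq0 : π i₀ ≠ 0 := (hirr i₀).ne_zero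
  -- `p = π₁ ^ a₁ * c`
  set c : O := (v : O) * ∏ i ∈ Finset.univ.erase i₀, π i ^ a i with hc
  have hpc : (p : O) = c * π i₀ ^ a i₀ := by
    rw [hfact, ← Finset.mul_prod_erase Finset.univ _ (Finset.mem_univ i₀), hc]
    ring
  have hqprime : Prime (π i₀) := (Ideal.span_singleton_prime hq0).mp hπ₁
  have hcq : ¬ π i₀ ∣ c := by
    intro h
    rcases hqprime.dvd_or_dvd h with h | h
    · exact hqprime.not_isUnit (isUnit_of_dvd_unit h v.isUnit)
    · obtain ⟨i, hi, hd⟩ := hqprime.exists_mem_finset_dvd h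
      have hdd := hqprime.dvd_of_dvd_pow hd
      exact hnonassoc i₀ i (Finset.ne_of_mem_erase hi).symm
        ((hirr i₀).associated_of_dvd (hirr i) hdd)
  -- `π₁ = s * t α` in the completion, `s` not divisible by `t α`
  set s := (u : AdicCompletion (maximalIdeal O) O) * ∏ β ∈ Finset.univ.erase α, t β with hs
  have hqs : algebraMap O (AdicCompletion (maximalIdeal O) O) (π i₀) = s * t α := by
    rw [hfact', ← Finset.mul_prod_erase Finset.univ _ (Finset.mem_univ α), hs]
    ring
  have hst : ¬ t α ∣ s := by
    intro h
    rcases (ht α).dvd_or_dvd h with h | h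
    · exact (ht α).not_isUnit (isUnit_of_dvd_unit h u.isUnit)
    · obtain ⟨β, hβ, hd⟩ := (ht α).exists_mem_finset_dvd h
      exact htnonassoc α β (Finset.ne_of_mem_erase hβ).symm (aux_assoc (ht β) (ht α) hd)
  have htc : ¬ t α ∣ algebraMap O (AdicCompletion (maximalIdeal O) O) c := fun h =>
    hcq (aux_contract hdim (π i₀) hq0 hπ₁ (t α) (ht α) ⟨s, by rw [hqs, mul_comm]⟩ c h)
  -- the image of `t α` in the localization is nonzero
  have ht0 : algebraMap (AdicCompletion (maximalIdeal O) O) Oloc (t α) ≠ 0 := by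
    intro h
    obtain ⟨y, hy⟩ := (IsLocalization.map_eq_zero_iff (Ideal.span {t α}).primeCompl Oloc _).mp h
    have hregular : IsSMulRegular (AdicCompletion (maximalIdeal O) O) (π i₀) :=
      Module.Flat.isSMulRegular_of_nonZeroDivisors (mem_nonZeroDivisors_of_ne_zero hq0)
    have hy0 : (y : AdicCompletion (maximalIdeal O) O) = 0 := by
      apply hregular
      simp only [smul_zero]
      rw [Algebra.smul_def, hqs, mul_assoc, mul_comm (t α), hy, mul_zero]
    exact y.2 (by rw [hy0]; exact Ideal.zero_mem _)
  have hw : IsUnit (algebraMap (AdicCompletion (maximalIdeal O) O) Oloc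
      (algebraMap O _ c * s ^ a i₀)) := by
    apply aux_locUnit
    intro h
    rcases (ht α).dvd_or_dvd h with h | h
    · exact htc h
    · exact hst ((ht α).dvd_of_dvd_pow h)
  have hp1 : (p : Oloc) = algebraMap (AdicCompletion (maximalIdeal O) O) Oloc
      (algebraMap O _ c * s ^ a i₀) *
        algebraMap (AdicCompletion (maximalIdeal O) O) Oloc (t α) ^ a i₀ := by
    rw [← map_pow, ← map_mul, mul_assoc, ← mul_pow, ← hqs, ← map_pow, ← map_mul, ← hpc,
      map_natCast, map_natCast]
  have key := aux_completion _ (aux_locMax (t α)) ht0 p _ hw (a i₀) hp1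
  refine ⟨key, key.trans (Iff.symm ?_)⟩
  refine aux_dvr _ (aux_locMax (π i₀)) ?_ p _ (aux_locUnit (π i₀) c hcq) (a i₀) ?_
  · intro h
    exact hq0 ((IsLocalization.to_map_eq_zero_iff _ (Ideal.primeCompl_le_nonZeroDivisors (Ideal.span {π i₀}))).mp h)
  · rw [← map_pow, ← map_mul, ← hpc, map_natCast]
end
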